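/- Let w be a non-increasing positive function on I=(0,a), 0<a≤∞, and let f be measurable on I with finite decreasing rearrangement f*. If a<∞, or if a=∞ and lim_{t→∞} f*(t)=0, then there exists a measurable v:I→[0,∞) with v* = w (a.e.), supp v ⊇ supp f, and such that (with the convention f/v=0 off supp f) the rearrangement of f*/w with respect to w·dm equals the rearrangement of f/v with respect to v·dm: (f*/w)^{*,w} = (f/v)^{*,v} on (0, ∫_I w dm). -/

import Mathlib

open MeasureTheory Set Filter
open scoped ENNReal

/-- The interval `(0, a)` for `a : ℝ≥0∞` (equals `(0,∞)` when `a = ∞`). -/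
def Iset (a : ℝ≥0∞) : Set ℝ := {x : ℝ | 0 < x ∧ ENNReal.ofReal x < a}

/-- Lebesgue measure restricted to the interval `(0,a)`. -/
noncomputable def volI (a : ℝ≥0∞) : Measure ℝ := volume.restrict (Iset a)

/-- Decreasing rearrangement of an `ℝ≥0∞`-valued function with respect to a measure `μ`:
`f^{*,μ}(t) = inf {s > 0 : μ({f > s}) ≤ t}`. -/
noncomputable def rearrE (μ : Measure ℝ) (f : ℝ → ℝ≥0∞) (t : ℝ) : ℝ≥0∞ :=
  sInf {s : ℝ≥0∞ | 0 < s ∧ μ {x | s < f x} ≤ ENNReal.ofReal t}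

/-- Decreasing rearrangement of a real function with respect to a measure `μ` on `ℝ`:
`f^{*,μ}(t) = inf {s > 0 : μ({|f| > s}) ≤ t}`. -/
noncomputable def rearr (μ : Measure ℝ) (f : ℝ → ℝ) (t : ℝ) : ℝ≥0∞ :=
  rearrE μ (fun x => ENNReal.ofReal |f x|) t

/-- The measure `w·dm` on the set `I`. -/
noncomputable def wMeas (I : Set ℝ) (w : ℝ → ℝ) : Measure ℝ :=
  (volume.restrict I).withDensity (fun t => ENNReal.ofReal (w t))

/-- `W(t) = ∫₀ᵗ w dm`. -/
noncomputable def Wfun (w : ℝ → ℝ) (t : ℝ) : ℝ := ∫ s in Set.Ioo (0:ℝ) t, w s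

/-- `b = ∫_I w dm` as an extended real number. -/
noncomputable def bval (a : ℝ≥0∞) (w : ℝ → ℝ) : ℝ≥0∞ := ∫⁻ x in Iset a, ENNReal.ofReal (w x)

lemma measurableSet_Iset (a : ℝ≥0∞) : MeasurableSet (Iset a) := by
  unfold Iset
  exact (measurableSet_lt measurable_const measurable_id).inter
    (measurableSet_lt ENNReal.measurable_ofReal measurable_const)

lemma volI_Iic (a : ℝ≥0∞) (t : ℝ) (hta : ENNReal.ofReal t < a) :
    volI a (Iic t) = ENNReal.ofReal t := by
  unfold volI
  rw [Measure.restrict_apply measurableSet_Iic]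
  have : Iic t ∩ Iset a = Ioc 0 t := by
    ext x
    simp only [Iset, mem_inter_iff, mem_Iic, mem_ofPred_eq, mem_Ioc]
    constructor
    · rintro ⟨h1, h2, h3⟩; exact ⟨h2, h1⟩
    · rintro ⟨h1, h2⟩; exact ⟨h2, h1, (ENNReal.ofReal_le_ofReal h2).trans_lt hta⟩
  rw [this, Real.volume_Ioc, sub_zero]

lemma Iset_top : Iset ∞ = Ioi 0 := by
  ext x; simp [Iset]

lemma Iset_of_ne_top {a : ℝ≥0∞} (h : a ≠ ∞) : Iset a = Ioo 0 a.toReal := by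
  ext x
  simp only [Iset, mem_ofPred_eq, mem_Ioo]
  refine and_congr_right fun hx => ?_
  rw [ENNReal.ofReal_lt_iff_lt_toReal hx.le h]

lemma volume_Iset (a : ℝ≥0∞) : volume (Iset a) = a := by
  by_cases h : a = ∞
  · subst h; rw [Iset_top]; simp
  · rw [Iset_of_ne_top h]; simp [h]

lemma volI_univ (a : ℝ≥0∞) : volI a univ = a := by
  unfold volI; rw [Measure.restrict_apply_univ, volume_Iset]

lemma Iic_aux {a : ℝ≥0∞} (ha : 0 < a) {ν : Measure ℝ}
    (h : ∀ t : ℝ, 0 < t → ENNReal.ofReal t < a → ν (Iic t) = ENNReal.ofReal t)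
    (hu : ν univ ≤ a) (t : ℝ) : ν (Iic t) = min (ENNReal.ofReal t) a := by
  rcases le_or_gt a (ENNReal.ofReal t) with h1 | h1
  · rw [min_eq_right h1]
    refine le_antisymm ((measure_mono (subset_univ _)).trans hu) ?_
    refine le_of_forall_lt fun c hc => ?_
    obtain ⟨d, hcd, hda⟩ := exists_between hc
    have hd : d ≠ ∞ := hda.ne_top
    have hd0 : 0 < d.toReal := ENNReal.toReal_pos (ne_bot_of_gt hcd) hd
    have h2 := h d.toReal hd0 (by rwa [ENNReal.ofReal_toReal hd])
    rw [ENNReal.ofReal_toReal hd] at h2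
    refine hcd.trans_le (h2 ▸ measure_mono (Iic_subset_Iic.2 ?_))
    by_contra h3
    push Not at h3
    have := (ENNReal.ofReal_le_ofReal h3.le)
    rw [ENNReal.ofReal_toReal hd] at this
    exact absurd (h1.trans this) (not_le.2 hda)
  · rw [min_eq_left h1.le]
    rcases lt_or_ge 0 t with h0 | h0
    · exact h t h0 h1
    · rw [ENNReal.ofReal_of_nonpos h0]
      refine le_antisymm ?_ bot_le
      refine le_of_forall_gt fun c hc => ?_
      obtain ⟨d, hd0, hdc⟩ := exists_between (lt_min hc ha)
      have hd : d ≠ ∞ := hdc.ne_top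
      have hd0 : 0 < d.toReal := ENNReal.toReal_pos hd0.ne' hd
      have h2 := h d.toReal hd0 (by rw [ENNReal.ofReal_toReal hd]; exact hdc.trans_le (min_le_right _ _))
      rw [ENNReal.ofReal_toReal hd] at h2
      refine lt_of_le_of_lt (measure_mono (Iic_subset_Iic.2 (h0.trans hd0.le))) ?_
      rw [h2]; exact hdc.trans_le (min_le_left _ _)

lemma eq_volI {a : ℝ≥0∞} (ha : 0 < a) {ν : Measure ℝ}
    (h : ∀ t : ℝ, 0 < t → ENNReal.ofReal t < a → ν (Iic t) = ENNReal.ofReal t)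
    (hu : ν univ ≤ a) : ν = volI a := by
  have h1 := Iic_aux ha h hu
  have h2 := Iic_aux ha (ν := volI a) (fun t _ ht => volI_Iic a t ht) (volI_univ a).le
  have fin : ∀ t, ν (Iic t) ≠ ∞ := fun t => by
    rw [h1]; exact ((min_le_left _ _).trans_lt ENNReal.ofReal_lt_top).ne
  have fin2 : ∀ t, volI a (Iic t) ≠ ∞ := fun t => by
    rw [h2]; exact ((min_le_left _ _).trans_lt ENNReal.ofReal_lt_top).ne
  refine Measure.ext_of_Ioc' _ _ (fun p q _ => ?_) (fun p q hpq => ?_)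
  · exact ((measure_mono Ioc_subset_Iic_self).trans_lt (fin q).lt_top).ne
  · have e : Ioc p q = Iic q \ Iic p := by
      ext x; simp [and_comm]
    rw [e, measure_diff (Iic_subset_Iic.2 hpq.le) measurableSet_Iic.nullMeasurableSet (fin p),
      measure_diff (Iic_subset_Iic.2 hpq.le) measurableSet_Iic.nullMeasurableSet (fin2 p), h1, h1, h2, h2]

lemma lt_rearrE {μ : Measure ℝ} {g : ℝ → ℝ≥0∞} (t : ℝ) (s : ℝ≥0∞) :
    s < rearrE μ g t ↔ ENNReal.ofReal t < μ {x | s < g x} := by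
  rw [← not_iff_not, not_lt, not_lt]
  constructor
  · intro h
    rcases eq_or_ne s ∞ with rfl | hs
    · simp
    obtain ⟨u, hu, hu1, hu2⟩ := exists_seq_strictAnti_tendsto' (x := s) (y := ∞) hs.lt_top
    have e : {x | s < g x} = ⋃ n, {x | u n < g x} := by
      ext x
      simp only [mem_ofPred_eq, mem_iUnion]
      constructor
      · intro hx
        exact ((hu2.eventually_lt_const hx)).exists
      · rintro ⟨n, hn⟩; exact (hu1 n).1.trans hn
    rw [e, Monotone.measure_iUnion]
    · refine iSup_le fun n => ?_
      have : rearrE μ g t < u n := h.trans_lt (hu1 n).1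
      obtain ⟨s', ⟨_, hs'⟩, hlt⟩ := sInf_lt_iff.1 this
      exact (measure_mono fun x (hx : u n < g x) => hlt.trans hx).trans hs'
    · intro m n hmn x hx
      exact (hu.antitone hmn).trans_lt hx
  · intro h
    refine le_of_forall_gt fun c hc => ?_
    obtain ⟨d, h1, h2⟩ := exists_between hc
    refine lt_of_le_of_lt (sInf_le ⟨bot_le.trans_lt h1, ?_⟩) h2
    exact (measure_mono fun x (hx : d < g x) => h1.trans hx).trans h

lemma rearrE_congr {μ ν : Measure ℝ} {g h : ℝ → ℝ≥0∞}
    (H : ∀ s, 0 < s → μ {x | s < g x} = ν {x | s < h x}) (t : ℝ) :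
    rearrE μ g t = rearrE ν h t := by
  unfold rearrE
  congr 1
  ext s
  simp only [mem_ofPred_eq]
  refine and_congr_right fun hs => by rw [H s hs]

lemma rearrE_anti (μ : Measure ℝ) (g : ℝ → ℝ≥0∞) : Antitone (rearrE μ g) := by
  intro p q hpq
  exact sInf_le_sInf fun s hs => ⟨hs.1, hs.2.trans (ENNReal.ofReal_le_ofReal hpq)⟩

/-- strict initial segment of `x` in the order "decreasing `g`, then increasing point" -/
def Lset (g : ℝ → ℝ≥0∞) (x : ℝ) : Set ℝ := {y | g x < g y ∨ (g y = g x ∧ y < x)}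

noncomputable def Tfun (a : ℝ≥0∞) (g : ℝ → ℝ≥0∞) (x : ℝ) : ℝ≥0∞ := volI a (Lset g x)

instance (a : ℝ≥0∞) : SFinite (volI a) := by unfold volI; infer_instance
instance (a : ℝ≥0∞) : NullSingletonClass (volI a) := by unfold volI; infer_instance

lemma measurable_Tfun (a : ℝ≥0∞) {g : ℝ → ℝ≥0∞} (hg : Measurable g) : Measurable (Tfun a g) := by
  have : MeasurableSet {p : ℝ × ℝ | g p.1 < g p.2 ∨ (g p.2 = g p.1 ∧ p.2 < p.1)} := by
    have h1 : Measurable fun p : ℝ × ℝ => g p.1 := hg.comp measurable_fst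
    have h2 : Measurable fun p : ℝ × ℝ => g p.2 := hg.comp measurable_snd
    exact (measurableSet_lt h1 h2).union ((measurableSet_eq_fun h2 h1).inter
      (measurableSet_lt measurable_snd measurable_fst))
  exact measurable_measure_prodMk_left (ν := volI a) this

lemma exists_Iio {a : ℝ≥0∞} {A : Set ℝ} {r : ℝ≥0∞} (hr : r < volI a A) :
    ∃ x : ℝ, volI a (A ∩ Iio x) = r := by
  have hfin : ∀ x : ℝ, volI a (A ∩ Iio x) ≠ ∞ := by
    intro x
    refine ne_top_of_le_ne_top (b := volume (Ioo 0 x)) (by simp) ?_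
    unfold volI
    rw [Measure.restrict_apply' (measurableSet_Iset a)]
    refine measure_mono ?_
    rintro y ⟨⟨_, h1⟩, h2⟩
    exact ⟨h2.1, h1⟩
  have h0 : volI a (A ∩ Iio 0) = 0 := by
    unfold volI
    rw [Measure.restrict_apply' (measurableSet_Iset a)]
    convert measure_empty (μ := (volume : Measure ℝ)) using 2
    ext y
    simp only [Iset, mem_inter_iff, mem_Iio, mem_ofPred_eq, mem_empty_iff_false, iff_false]
    rintro ⟨⟨_, h1⟩, h2, _⟩
    exact lt_asymm h1 h2
  obtain ⟨n, hn⟩ : ∃ n : ℕ, r < volI a (A ∩ Iio (n : ℝ)) := by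
    have e : A = ⋃ n : ℕ, A ∩ Iio (n : ℝ) := by
      ext y
      simp only [mem_iUnion, mem_inter_iff, mem_Iio, exists_and_left]
      exact ⟨fun h => ⟨h, exists_nat_gt y⟩, fun h => h.1⟩
    rw [e, Monotone.measure_iUnion] at hr
    · exact lt_iSup_iff.1 hr
    · intro m n hmn
      exact inter_subset_inter_right _ (Iio_subset_Iio (by exact_mod_cast hmn))
  have hrt : r ≠ ∞ := hn.ne_top
  have hc : Continuous fun x : ℝ => (volI a (A ∩ Iio x)).toReal := by
    refine LipschitzWith.continuous (K := 1) (LipschitzWith.of_le_add_mul _ fun x y => ?_)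
    have : volI a (A ∩ Iio x) ≤ volI a (A ∩ Iio y) + ENNReal.ofReal (dist x y) := by
      have h1 : A ∩ Iio x ⊆ (A ∩ Iio y) ∪ Ico y x := by
        rintro z ⟨hz, hzx⟩
        rcases lt_or_ge z y with h | h
        · exact Or.inl ⟨hz, h⟩
        · exact Or.inr ⟨h, hzx⟩
      refine (measure_mono h1).trans ((measure_union_le _ _).trans (add_le_add le_rfl ?_))
      refine (Measure.restrict_apply_le _ _).trans ?_
      rw [Real.volume_Ico]
      exact ENNReal.ofReal_le_ofReal (le_abs_self _)
    have := ENNReal.toReal_mono (ENNReal.add_ne_top.2 ⟨hfin y, ENNReal.ofReal_ne_top⟩) this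
    rw [ENNReal.toReal_add (hfin y) ENNReal.ofReal_ne_top, ENNReal.toReal_ofReal dist_nonneg] at this
    simpa using this
  have := intermediate_value_Icc (Nat.cast_nonneg (α := ℝ) n) hc.continuousOn
  have hm : r.toReal ∈ Icc (volI a (A ∩ Iio (0:ℝ))).toReal (volI a (A ∩ Iio (n:ℝ))).toReal := by
    rw [h0]
    exact ⟨by simp, ENNReal.toReal_mono (hfin _) hn.le⟩
  obtain ⟨x, _, hx⟩ := this hm
  exact ⟨x, (ENNReal.toReal_eq_toReal_iff' (hfin x) hrt).1 hx⟩

lemma exists_down {a : ℝ≥0∞} {g : ℝ → ℝ≥0∞} (hg : Measurable g)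
    (hd : ∀ s, 0 < s → volI a {x | s < g x} ≠ ∞)
    {t : ℝ} (hta : ENNReal.ofReal t < a) (hfin : rearrE (volI a) g t ≠ ∞) :
    ∃ B : Set ℝ, (∀ x ∈ B, Lset g x ⊆ B) ∧ volI a B = ENNReal.ofReal t := by
  set s := rearrE (volI a) g t with hs
  have h1 : volI a {x | s < g x} ≤ ENNReal.ofReal t := by
    rw [← not_lt, ← lt_rearrE]; exact lt_irrefl _
  have h2 : ENNReal.ofReal t ≤ volI a {x | s ≤ g x} := by
    rcases eq_or_ne s 0 with h0 | h0
    · rw [h0]; simp only [zero_le, ofPred_true]; rw [volI_univ]; exact hta.le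
    obtain ⟨u, hu, hu1, hu2⟩ := exists_seq_strictMono_tendsto' (x := s) (y := 0) (pos_iff_ne_zero.2 h0)
    have e : {x | s ≤ g x} = ⋂ n, {x | u n < g x} := by
      ext x
      simp only [mem_ofPred_eq, mem_iInter]
      constructor
      · intro hx n; exact (hu1 n).2.trans_le hx
      · intro hx; exact le_of_tendsto' hu2 fun n => (hx n).le
    rw [e, Antitone.measure_iInter]
    · refine le_iInf fun n => ?_
      exact ((lt_rearrE t (u n)).1 (hu1 n).2).le
    · intro m n hmn x hx
      exact (hu.monotone hmn).trans_lt hx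
    · intro n; exact (measurableSet_lt measurable_const hg).nullMeasurableSet
    · exact ⟨0, hd _ (hu1 0).1⟩
  rcases h2.eq_or_lt with h3 | h3
  · refine ⟨{x | s ≤ g x}, ?_, h3.symm⟩
    rintro x hx y (hy | ⟨hy, _⟩)
    · exact le_trans hx hy.le
    · exact le_of_le_of_eq hx hy.symm
  · have hfin1 : volI a {x | s < g x} ≠ ∞ := ne_top_of_le_ne_top ENNReal.ofReal_ne_top h1
    have hms : MeasurableSet {x | g x = s} := measurableSet_eq_fun hg measurable_const
    have e : {x | s ≤ g x} = {x | s < g x} ∪ {x | g x = s} := by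
      ext x; simp only [mem_ofPred_eq, mem_union]; rw [le_iff_lt_or_eq, eq_comm (a := s)]
    have dj : Disjoint {x | s < g x} {x | g x = s} := by
      rw [Set.disjoint_left]; intro x hx hx'; exact (ne_of_gt hx) hx'
    rw [e, measure_union dj hms] at h3
    have h4 : ENNReal.ofReal t - volI a {x | s < g x} < volI a {x | g x = s} :=
      ENNReal.sub_lt_of_lt_add h1 (by rwa [add_comm])
    obtain ⟨x0, hx0⟩ := exists_Iio h4
    refine ⟨{x | s < g x} ∪ ({x | g x = s} ∩ Iio x0), ?_, ?_⟩
    · rintro x (hx | ⟨hx, hx'⟩) y (hy | ⟨hy, hy'⟩)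
      · exact Or.inl (lt_trans hx hy)
      · exact Or.inl (lt_of_lt_of_eq hx hy.symm)
      · exact Or.inl (lt_of_eq_of_lt (Eq.symm hx) hy)
      · exact Or.inr ⟨hy.trans hx, lt_trans hy' hx'⟩
    · rw [measure_union (dj.mono_right inter_subset_left) (hms.inter measurableSet_Iio), hx0,
        add_tsub_cancel_of_le h1]

lemma measure_T_le {a : ℝ≥0∞} {g : ℝ → ℝ≥0∞} (hg : Measurable g)
    (hd : ∀ s, 0 < s → volI a {x | s < g x} ≠ ∞)
    (hfin : ∀ t ∈ Iset a, rearrE (volI a) g t ≠ ∞)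
    {t : ℝ} (h0 : 0 < t) (hta : ENNReal.ofReal t < a) :
    volI a {x | Tfun a g x ≤ ENNReal.ofReal t} = ENNReal.ofReal t := by
  have key : ∀ t ∈ Iset a, volI a {x | Tfun a g x < ENNReal.ofReal t} ≤ ENNReal.ofReal t ∧
      ENNReal.ofReal t ≤ volI a {x | Tfun a g x ≤ ENNReal.ofReal t} := by
    intro t ht
    obtain ⟨B, hB, hBm⟩ := exists_down hg hd ht.2 (hfin t ht)
    constructor
    · rw [← hBm]
      refine measure_mono fun x (hx : Tfun a g x < _) => ?_
      by_contra hxB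
      refine absurd hx (not_lt.2 (measure_mono fun y hy => ?_))
      by_contra hy'
      simp only [Lset, mem_ofPred_eq, not_or, not_and, not_lt] at hy'
      rcases hy'.1.lt_or_eq with h | h
      · exact hxB (hB y hy (Or.inl h))
      · rcases (hy'.2 h).lt_or_eq with h' | h'
        · exact hxB (hB y hy (Or.inr ⟨h.symm, h'⟩))
        · exact hxB (h' ▸ hy)
    · conv_lhs => rw [← hBm]
      refine measure_mono fun x hx => ?_
      exact (measure_mono (hB x hx)).trans hBm.le
  refine le_antisymm ?_ (key t ⟨h0, hta⟩).2
  refine le_of_forall_gt fun c hc => ?_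
  obtain ⟨d, hd0, hdc⟩ := exists_between (lt_min hc hta)
  have hd : d ≠ ∞ := hdc.ne_top
  have hd00 : 0 < d.toReal := ENNReal.toReal_pos (ne_bot_of_gt hd0) hd
  have h2 := (key d.toReal ⟨hd00, by
    rw [ENNReal.ofReal_toReal hd]; exact hdc.trans_le (min_le_right _ _)⟩).1
  rw [ENNReal.ofReal_toReal hd] at h2
  refine lt_of_le_of_lt ((measure_mono fun x (hx : Tfun a g x ≤ ENNReal.ofReal t) => ?_).trans h2)
    (hdc.trans_le (min_le_left _ _))
  exact lt_of_le_of_lt hx hd0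

lemma map_T {a : ℝ≥0∞} (ha : 0 < a) {g : ℝ → ℝ≥0∞} (hg : Measurable g)
    (hd : ∀ s, 0 < s → volI a {x | s < g x} ≠ ∞)
    (hfin : ∀ t ∈ Iset a, rearrE (volI a) g t ≠ ∞) :
    Measure.map (fun x => (Tfun a g x).toReal) ((volI a).restrict {x | Tfun a g x < ∞}) = volI a := by
  have hT := measurable_Tfun a hg
  have hE : MeasurableSet {x | Tfun a g x < ∞} := measurableSet_lt hT measurable_const
  refine eq_volI ha (fun t h0 hta => ?_) ?_
  · rw [Measure.map_apply hT.ennreal_toReal measurableSet_Iic,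
      Measure.restrict_apply (hT.ennreal_toReal measurableSet_Iic)]
    conv_rhs => rw [← measure_T_le hg hd hfin h0 hta]
    congr 1
    ext x
    simp only [mem_inter_iff, mem_preimage, mem_Iic, mem_ofPred_eq]
    constructor
    · rintro ⟨h1, h2⟩; exact (ENNReal.le_ofReal_iff_toReal_le h2.ne h0.le).2 h1
    · intro h
      have : Tfun a g x < ∞ := h.trans_lt ENNReal.ofReal_lt_top
      exact ⟨(ENNReal.le_ofReal_iff_toReal_le this.ne h0.le).1 h, this⟩
  · rw [Measure.map_apply hT.ennreal_toReal MeasurableSet.univ, preimage_univ,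
      Measure.restrict_apply_univ]
    exact (measure_mono (subset_univ _)).trans (volI_univ a).le

lemma Iset_of_ge (a d : ℝ≥0∞) (h : d ≤ a) : volI a {t | ENNReal.ofReal t < d} = d := by
  unfold volI
  rw [Measure.restrict_apply (measurableSet_lt ENNReal.measurable_ofReal measurable_const)]
  conv_rhs => rw [← volume_Iset d]
  congr 1
  ext x
  simp only [Iset, mem_inter_iff, mem_ofPred_eq]
  exact ⟨fun h => ⟨h.2.1, h.1⟩, fun h' => ⟨h'.2, h'.1, h'.2.trans_le h⟩⟩

lemma T_lt_top {a : ℝ≥0∞} {g : ℝ → ℝ≥0∞} 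
    (hd : ∀ s, 0 < s → volI a {x | s < g x} ≠ ∞) {x : ℝ} (hx : 0 < g x) : Tfun a g x < ∞ := by
  obtain ⟨s, h1, h2⟩ := exists_between hx
  refine (measure_mono ?_).trans_lt (hd s h1).lt_top
  rintro y (hy | ⟨hy, _⟩)
  · exact h2.trans hy
  · exact h2.trans_eq hy.symm

lemma f_eq {a : ℝ≥0∞} (ha : 0 < a) {g : ℝ → ℝ≥0∞} (hg : Measurable g)
    (hd : ∀ s, 0 < s → volI a {x | s < g x} ≠ ∞)
    (hfin : ∀ t ∈ Iset a, rearrE (volI a) g t ≠ ∞) :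
    ∀ᵐ x ∂((volI a).restrict {x | Tfun a g x < ∞}), 
      rearrE (volI a) g (Tfun a g x).toReal = g x := by
  have hT := measurable_Tfun a hg
  have hR : Measurable (rearrE (volI a) g) := (rearrE_anti _ _).measurable
  have hE : MeasurableSet {x | Tfun a g x < ∞} := measurableSet_lt hT measurable_const
  have hRT : Measurable fun x => rearrE (volI a) g (Tfun a g x).toReal := hR.comp hT.ennreal_toReal
  set ν := (volI a).restrict {x | Tfun a g x < ∞} with hν
  have hle : ∀ x, Tfun a g x < ∞ → rearrE (volI a) g (Tfun a g x).toReal ≤ g x := by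
    intro x hx
    rw [← not_lt, lt_rearrE, not_lt, ENNReal.ofReal_toReal hx.ne]
    exact measure_mono fun y hy => Or.inl hy
  have hq : ∀ q : ℚ, ∀ᵐ x ∂ν, 0 < q → ENNReal.ofReal q < g x →
      ENNReal.ofReal q < rearrE (volI a) g (Tfun a g x).toReal := by
    intro q
    by_cases hq0 : 0 < q
    swap
    · exact Eventually.of_forall fun x h => absurd h hq0
    set s := ENNReal.ofReal q with hs
    have hs0 : 0 < s := ENNReal.ofReal_pos.2 (by exact_mod_cast hq0)
    have e1 : ν {x | s < rearrE (volI a) g (Tfun a g x).toReal} = volI a {x | s < g x} := by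
      have := Measure.map_apply (μ := ν) hT.ennreal_toReal (measurableSet_lt (measurable_const (a := s)) hR)
      rw [hν, map_T ha hg hd hfin, ← hν] at this
      refine Eq.trans this.symm ?_
      simp only [lt_rearrE]
      exact Iset_of_ge _ _ ((measure_mono (subset_univ _)).trans (volI_univ a).le)
    have e2 : ν {x | s < g x} = volI a {x | s < g x} := by
      rw [hν, Measure.restrict_apply (measurableSet_lt measurable_const hg)]
      congr 1
      exact inter_eq_left.2 fun x hx => T_lt_top hd (lt_trans hs0 hx)
    have hsub : {x | s < rearrE (volI a) g (Tfun a g x).toReal} ≤ᵐ[ν] {x | s < g x} := by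
      filter_upwards [ae_restrict_mem hE] with x hx h
      exact lt_of_lt_of_le h (hle x hx)
    have := ae_eq_of_ae_subset_of_measure_ge hsub (by rw [e1, e2])
      (measurableSet_lt measurable_const hRT).nullMeasurableSet (by rw [e2]; exact hd s hs0)
    filter_upwards [this] with x hx _ h
    exact (eq_iff_iff.1 hx).2 h
  filter_upwards [ae_all_iff.2 hq, ae_restrict_mem hE] with x hx hxE
  refine le_antisymm (hle x hxE) ?_
  by_contra hcon
  push Not at hcon
  obtain ⟨q, hq0, h1, h2⟩ := ENNReal.lt_iff_exists_rat_btwn.1 hcon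
  have hq' : 0 < q := by
    rcases hq0.lt_or_eq with h | h
    · exact h
    · subst h; simp at h1
  exact absurd (hx q hq' h2) (not_lt.2 h1.le)

lemma rearr_w {a : ℝ≥0∞} {w : ℝ → ℝ} (hw_pos : ∀ x ∈ Iset a, 0 < w x)
    (hw_anti : AntitoneOn w (Iset a)) :
    ∀ᵐ t ∂(volI a), rearr (volI a) w t = ENNReal.ofReal (w t) := by
  have hc : {x | x ∈ Iset a ∧ ¬ ContinuousWithinAt w (Iset a) x}.Countable :=
    hw_anti.countable_not_continuousWithinAt
  have hI := measurableSet_Iset a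
  have hopen : IsOpen (Iset a) := by
    by_cases h : a = ∞
    · subst h; rw [Iset_top]; exact isOpen_Ioi
    · rw [Iset_of_ne_top h]; exact isOpen_Ioo
  filter_upwards [hc.ae_notMem (volI a), ae_restrict_mem hI] with t ht htI
  have hct : ContinuousAt w t := by
    have : ContinuousWithinAt w (Iset a) t := by
      by_contra h; exact ht ⟨htI, h⟩
    exact this.continuousAt (hopen.mem_nhds htI)
  refine le_antisymm ?_ ?_
  · unfold rearr
    rw [← not_lt, lt_rearrE, not_lt]
    unfold volI
    rw [Measure.restrict_apply' hI]
    have : {x | ENNReal.ofReal (w t) < ENNReal.ofReal |w x|} ∩ Iset a ⊆ Ioc 0 t := by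
      rintro x ⟨hx, hxI⟩
      refine ⟨hxI.1, ?_⟩
      by_contra hlt
      push Not at hlt
      have := hw_anti htI hxI hlt.le
      simp only [mem_ofPred_eq, abs_of_pos (hw_pos x hxI)] at hx
      exact absurd hx (not_lt.2 (ENNReal.ofReal_le_ofReal this))
    refine (measure_mono this).trans ?_
    simp
  · refine le_of_forall_lt fun s hs => ?_
    unfold rearr
    rw [lt_rearrE]
    have hcE : ContinuousAt (fun x => ENNReal.ofReal (w x)) t :=
      ENNReal.continuous_ofReal.continuousAt.comp hct
    have hev : ∀ᶠ x in nhds t, s < ENNReal.ofReal (w x) ∧ x ∈ Iset a :=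
      (hcE.eventually_const_lt hs).and (hopen.mem_nhds htI)
    obtain ⟨ε, hε, hb⟩ := Metric.eventually_nhds_iff.1 hev
    have h1 := hb (y := t + ε/2) (by simp [Real.dist_eq, abs_of_pos hε]; linarith)
    have : Ioc 0 (t + ε/2) ⊆ {x | s < ENNReal.ofReal |w x|} ∩ Iset a := by
      intro x hx
      have hxI : x ∈ Iset a := ⟨hx.1, (ENNReal.ofReal_le_ofReal hx.2).trans_lt h1.2.2⟩
      refine ⟨?_, hxI⟩
      simp only [mem_ofPred_eq, abs_of_pos (hw_pos x hxI)]
      exact h1.1.trans_le (ENNReal.ofReal_le_ofReal (hw_anti hxI h1.2 hx.2))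
    unfold volI
    rw [Measure.restrict_apply' hI]
    refine lt_of_lt_of_le ?_ (measure_mono this)
    rw [Real.volume_Ioc, sub_zero]
    exact (ENNReal.ofReal_lt_ofReal_iff (by linarith [htI.1])).2 (by linarith)

/-- If `a < ∞`, or `a = ∞` and `f*(t) → 0` as `t → ∞`, then there exists `v ≥ 0`
with `v* = w` a.e., `supp v ⊇ supp f`, and `(f*/w)^{*,w} = (f/v)^{*,v}` on `(0, ∫_I w dm)`. -/
theorem stmt_6 (a : ℝ≥0∞) (ha : 0 < a) (w f : ℝ → ℝ)
    (hw_pos : ∀ x ∈ Iset a, 0 < w x) (hw_anti : AntitoneOn w (Iset a)) (hw_meas : Measurable w)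
    (hf_meas : Measurable f)
    (hf_fin : ∀ t ∈ Iset a, rearr (volI a) f t ≠ ∞)
    (hcase : a ≠ ∞ ∨ Tendsto (fun t => rearr (volI a) f t) atTop (nhds 0)) :
    ∃ v : ℝ → ℝ, Measurable v ∧ (∀ x ∈ Iset a, 0 ≤ v x) ∧
      (∀ᵐ t ∂(volI a), rearr (volI a) v t = ENNReal.ofReal (w t)) ∧
      (∀ᵐ x ∂(volI a), v x = 0 → f x = 0) ∧
      ∀ t : ℝ, 0 < t → ENNReal.ofReal t < bval a w →
        rearrE (wMeas (Iset a) w) (fun s => rearr (volI a) f s / ENNReal.ofReal (w s)) t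
          = rearr (wMeas (Iset a) v) (fun y => f y / v y) t := by
  set g : ℝ → ℝ≥0∞ := fun x => ENNReal.ofReal |f x| with hgdef
  have hg : Measurable g := ENNReal.measurable_ofReal.comp hf_meas.abs
  have hR : ∀ t, rearr (volI a) f t = rearrE (volI a) g t := fun t => rfl
  simp only [hR] at hf_fin hcase ⊢
  have hd : ∀ s, 0 < s → volI a {x | s < g x} ≠ ∞ := by
    intro s hs
    rcases hcase with h | h
    · exact ne_top_of_le_ne_top h ((measure_mono (subset_univ _)).trans (volI_univ a).le)
    · obtain ⟨t, ht⟩ := (h.eventually_lt_const hs).exists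
      have := (lt_rearrE t s).not.1 (not_lt.2 ht.le)
      exact ne_top_of_le_ne_top ENNReal.ofReal_ne_top (not_lt.1 this)
  have hT := measurable_Tfun a hg
  have hI := measurableSet_Iset a
  set E : Set ℝ := {x | Tfun a g x < ∞} with hEdef
  have hE : MeasurableSet E := measurableSet_lt hT measurable_const
  set τ : ℝ → ℝ := fun x => (Tfun a g x).toReal with hτdef
  have hτ : Measurable τ := hT.ennreal_toReal
  have hmap : Measure.map τ ((volI a).restrict E) = volI a := map_T ha hg hd hf_fin
  have hfe := f_eq ha hg hd hf_fin
  have hRm : Measurable (rearrE (volI a) g) := (rearrE_anti _ _).measurable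
  have hτI : ∀ᵐ x ∂((volI a).restrict E), τ x ∈ Iset a := by
    refine ae_of_ae_map hτ.aemeasurable ?_
    rw [hmap]
    exact ae_restrict_mem hI
  have hvm : Measurable (E.indicator fun x => |w (τ x)|) :=
    (hw_meas.comp hτ).abs.indicator hE
  have hg0 : ∀ x, x ∉ E → f x = 0 := by
    intro x hx
    by_contra h
    exact hx (T_lt_top hd (ENNReal.ofReal_pos.2 (abs_pos.2 h)))
  refine ⟨E.indicator fun x => |w (τ x)|, hvm, ?_, ?_, ?_, ?_⟩
  · intro x _
    exact indicator_nonneg (fun _ _ => abs_nonneg _) x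
  · filter_upwards [rearr_w hw_pos hw_anti] with t ht
    rw [← ht]
    unfold rearr
    refine rearrE_congr (fun s hs => ?_) t
    have hms : MeasurableSet {x | s < ENNReal.ofReal |w x|} :=
      measurableSet_lt measurable_const hw_meas.abs.ennreal_ofReal
    conv_rhs => rw [← hmap, Measure.map_apply hτ hms, Measure.restrict_apply (hτ hms)]
    congr 1
    ext x
    by_cases hx : x ∈ E <;> simp [hx]
  · have := (ae_restrict_iff' hE).1 hτI
    filter_upwards [this] with x hx h0
    by_cases hxE : x ∈ E
    · rw [indicator_of_mem hxE] at h0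
      exact absurd (abs_eq_zero.1 h0) (hw_pos _ (hx hxE)).ne'
    · exact hg0 x hxE
  · intro t _ _
    unfold rearr
    refine rearrE_congr (fun s hs => ?_) t
    have hA : MeasurableSet {x | s < rearrE (volI a) g x / ENNReal.ofReal (w x)} :=
      measurableSet_lt measurable_const (hRm.div hw_meas.ennreal_ofReal)
    have hB : MeasurableSet {x | s < ENNReal.ofReal |f x / E.indicator (fun x => |w (τ x)|) x|} :=
      measurableSet_lt measurable_const (hf_meas.div hvm).abs.ennreal_ofReal
    unfold wMeas
    rw [withDensity_apply _ hA, withDensity_apply _ hB, ← lintegral_indicator hA,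
      ← lintegral_indicator hB]
    change ∫⁻ x, _ ∂(volI a) = ∫⁻ x, _ ∂(volI a)
    have hm := lintegral_map (μ := (volI a).restrict E) (hw_meas.ennreal_ofReal.indicator hA) hτ
    rw [hmap, ← lintegral_indicator hE] at hm
    refine hm.trans ?_
    refine lintegral_congr_ae ?_
    filter_upwards [(ae_restrict_iff' hE).1 hτI, (ae_restrict_iff' hE).1 hfe] with x hx1 hx2
    by_cases hxE : x ∈ E
    · have hwp := hw_pos _ (hx1 hxE)
      have h2 : rearrE (volI a) g (τ x) = g x := hx2 hxE
      have : ENNReal.ofReal |f x / w (τ x)| = g x / ENNReal.ofReal (w (τ x)) := by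
        rw [abs_div, abs_of_pos hwp, ENNReal.ofReal_div_of_pos hwp]
      simp only [indicator_apply, hxE, if_true, mem_ofPred_eq, h2, abs_of_pos hwp, this]
    · simp [indicator_apply, hxE]
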